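/- arXiv:2604.10952 — 2 statements merged into one kernel-verified Lean document; each statement's English description precedes it below -/
import Mathlib

section
/- For every subset P of {1,…,m} and every index i ∈ {1,…,m} with i ∉ P, h(P ∪ {i}) ≥ h(P) + (1/n)·Σ_{j=1}^{n} S_{ij}. -/
open Finset

noncomputable section

/-- Frobenius inner product `⟨S, γ⟩ = Σ_{i,j} S_{ij} γ_{ij}`. -/
def dotS {m n : ℕ} (S γ : Fin m → Fin n → ℝ) : ℝ := ∑ i, ∑ j, S i j * γ i j

/-- Transport polytope with equality marginals. -/
def Gamma {m n : ℕ} (μ : Fin m → ℝ) (ν : Fin n → ℝ) : Set (Fin m → Fin n → ℝ) :=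
  {γ | (∀ i j, 0 ≤ γ i j) ∧ (∀ i, ∑ j, γ i j = μ i) ∧ (∀ j, ∑ i, γ i j = ν j)}

/-- Semi-relaxed transport polytope: target marginal constraint is `≤`. -/
def GammaLe {m n : ℕ} (μ : Fin m → ℝ) (ν : Fin n → ℝ) : Set (Fin m → Fin n → ℝ) :=
  {γ | (∀ i j, 0 ≤ γ i j) ∧ (∀ i, ∑ j, γ i j = μ i) ∧ (∀ j, ∑ i, γ i j ≤ ν j)}

/-- Indicator vector of a subset `P ⊆ {1,…,m}`. -/
def indVec {m : ℕ} (P : Finset (Fin m)) : Fin m → ℝ := fun i => if i ∈ P then 1 else 0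

/-- `h(P) = max_{γ ∈ Γ(1_P, (|P|/n)𝟙)} ⟨S, γ⟩`. -/
def hval {m n : ℕ} (S : Fin m → Fin n → ℝ) (P : Finset (Fin m)) : ℝ :=
  sSup (dotS S '' Gamma (indVec P) (fun _ => (P.card : ℝ) / (n : ℝ)))

/-- `f(P) = max_{γ ∈ Γ_≤(1_P, (k/n)𝟙)} ⟨S, γ⟩`. -/
def fval {m n : ℕ} (k : ℕ) (S : Fin m → Fin n → ℝ) (P : Finset (Fin m)) : ℝ :=
  sSup (dotS S '' GammaLe (indVec P) (fun _ => (k : ℝ) / (n : ℝ)))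

/-!
Couplings add: if `γ ∈ Γ(μ, ν)` and `δ ∈ Γ(μ', ν')`, then `γ + δ ∈ Γ(μ + μ', ν + ν')`. Hence the
transport value is superadditive in the marginals, and `h(P ∪ Q) ≥ h(P) + h(Q)` for disjoint `P`
and `Q`. Evaluating `⟨S, ·⟩` at the product coupling of `1_{i}` with the uniform distribution gives
`h({i}) ≥ (1/n) Σ_j S_{ij}`.
-/

open scoped Pointwise

section

variable {m n : ℕ}

/-- The value `max_{γ ∈ Γ(μ, ν)} ⟨S, γ⟩` of the transport problem with profit `S`, encoded as a
supremum; it is the junk value `0` when `Γ(μ, ν)` is empty. -/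
def transportValue (S : Fin m → Fin n → ℝ) (μ : Fin m → ℝ) (ν : Fin n → ℝ) : ℝ :=
  sSup (dotS S '' Gamma μ ν)

lemma dotS_add (S γ δ : Fin m → Fin n → ℝ) : dotS S (γ + δ) = dotS S γ + dotS S δ := by
  simp only [dotS, Pi.add_apply, mul_add, sum_add_distrib]

lemma continuous_dotS (S : Fin m → Fin n → ℝ) : Continuous (dotS S) := by
  unfold dotS
  fun_prop

lemma add_mem_gamma {μ μ' : Fin m → ℝ} {ν ν' : Fin n → ℝ} {γ δ : Fin m → Fin n → ℝ}
    (hγ : γ ∈ Gamma μ ν) (hδ : δ ∈ Gamma μ' ν') : γ + δ ∈ Gamma (μ + μ') (ν + ν') := by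
  obtain ⟨hγ_nonneg, hγ_row, hγ_col⟩ := hγ
  obtain ⟨hδ_nonneg, hδ_row, hδ_col⟩ := hδ
  refine ⟨fun i j ↦ add_nonneg (hγ_nonneg i j) (hδ_nonneg i j), fun i ↦ ?_, fun j ↦ ?_⟩
  · simp only [Pi.add_apply, sum_add_distrib, hγ_row, hδ_row]
  · simp only [Pi.add_apply, sum_add_distrib, hγ_col, hδ_col]

lemma isClosed_gamma (μ : Fin m → ℝ) (ν : Fin n → ℝ) : IsClosed (Gamma μ ν) := by
  simp only [Gamma, Set.ofPred_and, Set.ofPred_forall]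
  refine .inter ?_ (.inter ?_ ?_)
  · exact isClosed_iInter fun i ↦ isClosed_iInter fun j ↦ isClosed_le (by fun_prop) (by fun_prop)
  · exact isClosed_iInter fun i ↦ isClosed_eq (by fun_prop) (by fun_prop)
  · exact isClosed_iInter fun j ↦ isClosed_eq (by fun_prop) (by fun_prop)

lemma isCompact_gamma (μ : Fin m → ℝ) (ν : Fin n → ℝ) : IsCompact (Gamma μ ν) := by
  have subset_box : Gamma μ ν ⊆ Set.Icc 0 (fun i _ ↦ μ i) := fun γ ⟨nonneg, row, _⟩ ↦
    ⟨nonneg, fun i j ↦ (single_le_sum (fun k _ ↦ nonneg i k) (mem_univ j)).trans_eq (row i)⟩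
  exact isCompact_Icc.of_isClosed_subset (isClosed_gamma μ ν) subset_box

lemma bddAbove_dotS_image_gamma (S : Fin m → Fin n → ℝ) (μ : Fin m → ℝ) (ν : Fin n → ℝ) :
    BddAbove (dotS S '' Gamma μ ν) :=
  (isCompact_gamma μ ν).bddAbove_image (continuous_dotS S).continuousOn

lemma dotS_le_transportValue (S : Fin m → Fin n → ℝ) {μ : Fin m → ℝ} {ν : Fin n → ℝ}
    {γ : Fin m → Fin n → ℝ} (hγ : γ ∈ Gamma μ ν) : dotS S γ ≤ transportValue S μ ν :=
  le_csSup (bddAbove_dotS_image_gamma S μ ν) ⟨γ, hγ, rfl⟩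

lemma transportValue_add_le (S : Fin m → Fin n → ℝ) {μ μ' : Fin m → ℝ} {ν ν' : Fin n → ℝ}
    (hne : (Gamma μ ν).Nonempty) (hne' : (Gamma μ' ν').Nonempty) :
    transportValue S μ ν + transportValue S μ' ν' ≤ transportValue S (μ + μ') (ν + ν') := by
  unfold transportValue
  rw [← csSup_add (hne.image _) (bddAbove_dotS_image_gamma S μ ν)
    (hne'.image _) (bddAbove_dotS_image_gamma S μ' ν')]
  refine csSup_le ((hne.image _).add (hne'.image _)) ?_
  rintro _ ⟨_, ⟨γ, hγ, rfl⟩, _, ⟨δ, hδ, rfl⟩, rfl⟩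
  exact (dotS_add S γ δ).symm.trans_le (dotS_le_transportValue S (add_mem_gamma hγ hδ))

lemma mul_mem_gamma {μ : Fin m → ℝ} {p : Fin n → ℝ} (hμ : ∀ i, 0 ≤ μ i) (hp : ∀ j, 0 ≤ p j)
    (hp_sum : ∑ j, p j = 1) :
    (fun i j ↦ μ i * p j) ∈ Gamma μ (fun j ↦ (∑ i, μ i) * p j) :=
  ⟨fun i j ↦ mul_nonneg (hμ i) (hp j), fun i ↦ by rw [← mul_sum, hp_sum, mul_one],
    fun j ↦ (sum_mul ..).symm⟩

lemma indVec_nonneg (P : Finset (Fin m)) (i : Fin m) : 0 ≤ indVec P i := by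
  unfold indVec
  positivity

lemma sum_indVec (P : Finset (Fin m)) : ∑ i, indVec P i = #P := by
  simp [indVec]

lemma indVec_union {P Q : Finset (Fin m)} (hPQ : Disjoint P Q) :
    indVec (P ∪ Q) = indVec P + indVec Q := by
  ext i
  have not_mem_both : i ∈ P → i ∉ Q := fun hP ↦ disjoint_left.mp hPQ hP
  by_cases hP : i ∈ P <;> simp_all [indVec]

lemma indVec_div_mem_gamma (hn : 0 < n) (P : Finset (Fin m)) :
    (fun i _ ↦ indVec P i / n) ∈ Gamma (indVec P) (fun _ : Fin n ↦ (#P : ℝ) / n) := by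
  have uniform_sum : ∑ _ : Fin n, (n : ℝ)⁻¹ = 1 := by
    simp [hn.ne']
  simpa only [sum_indVec, ← div_eq_mul_inv] using
    mul_mem_gamma (indVec_nonneg P) (fun _ ↦ by positivity) uniform_sum

lemma hval_add_hval_le_hval_union (hn : 0 < n) (S : Fin m → Fin n → ℝ) {P Q : Finset (Fin m)}
    (hPQ : Disjoint P Q) : hval S P + hval S Q ≤ hval S (P ∪ Q) := by
  have colMarginal_union : (fun _ : Fin n ↦ (#(P ∪ Q) : ℝ) / n) =
      (fun _ ↦ (#P : ℝ) / n) + (fun _ ↦ (#Q : ℝ) / n) := by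
    ext
    simp only [card_union_of_disjoint hPQ, Nat.cast_add, add_div, Pi.add_apply]
  change transportValue S _ _ + transportValue S _ _ ≤ transportValue S _ _
  rw [indVec_union hPQ, colMarginal_union]
  exact transportValue_add_le S ⟨_, indVec_div_mem_gamma hn P⟩ ⟨_, indVec_div_mem_gamma hn Q⟩

lemma sum_div_le_hval (hn : 0 < n) (S : Fin m → Fin n → ℝ) (P : Finset (Fin m)) :
    (∑ i ∈ P, ∑ j, S i j) / n ≤ hval S P := by
  calc (∑ i ∈ P, ∑ j, S i j) / n
      = dotS S (fun i _ ↦ indVec P i / n) := by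
        simp [dotS, indVec, ← sum_mul, div_eq_mul_inv]
    _ ≤ hval S P := dotS_le_transportValue S (indVec_div_mem_gamma hn P)

end

theorem stmt_2_general {m n : ℕ} (hn : 0 < n) (S : Fin m → Fin n → ℝ)
    {P : Finset (Fin m)} {i : Fin m} (hi : i ∉ P) :
    hval S P + (1 / (n : ℝ)) * ∑ j, S i j ≤ hval S (insert i P) := by
  calc hval S P + (1 / (n : ℝ)) * ∑ j, S i j
      = hval S P + (∑ a ∈ {i}, ∑ j, S a j) / n := by
        rw [sum_singleton, one_div_mul_eq_div]
    _ ≤ hval S P + hval S {i} := by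
        gcongr
        exact sum_div_le_hval hn S {i}
    _ ≤ hval S (P ∪ {i}) :=
        hval_add_hval_le_hval_union hn S (disjoint_singleton_right.mpr hi)
    _ = hval S (insert i P) := by rw [union_comm, insert_eq]

/-- `h(P ∪ {i}) ≥ h(P) + (1/n)·Σ_j S_{ij}` for `i ∉ P`. -/
theorem stmt_2 (m n : ℕ) (hm : 0 < m) (hn : 0 < n)
    (S : Fin m → Fin n → ℝ) (hS : ∀ i j, 0 ≤ S i j)
    (P : Finset (Fin m)) (i : Fin m) (hi : i ∉ P) :
    hval S P + (1 / (n : ℝ)) * ∑ j, S i j ≤ hval S (insert i P) :=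
  stmt_2_general hn S hi
end
end

section
/- Equivalence of the two cardinality-constrained problems: let P* be a subset of {1,…,m} with |P*| = k. Then h(P*) ≥ h(P) for every subset P of {1,…,m} with |P| ≤ k if and only if f(P*) ≥ f(P) for every subset P of {1,…,m} with |P| ≤ k. -/
open Finset

noncomputable section

/-!
Since `Γ(1_P, (|P|/n)𝟙) ⊆ Γ_≤(1_P, (k/n)𝟙)`, we have `h(P) ≤ f(P)` whenever `|P| ≤ k`. Conversely,
if `P ⊆ Q` and `|Q| = k`, then the mass missing from a plan `γ ∈ Γ_≤(1_P, (k/n)𝟙)` in the rows of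
`Q \ P` equals its unused column capacity. Adding a product coupling of these two residuals
completes `γ` to a plan in `Γ(1_Q, (k/n)𝟙)` without decreasing any entry, and since `S ≥ 0` this
gives `f(P) ≤ h(Q)`. So `f` and `h` agree on sets of size `k`, and they have the same maximum over
the sets of size at most `k`. Only the total mass of the uniform target weights matters, so any
probability vector can take their place.
-/

/-- The maximum of `⟨S, γ⟩` over transport plans `γ` with marginals `μ` and `ν`, as a supremum;
it is the junk value `0` when there is no such plan. -/
def transportMax {m n : ℕ} (S : Fin m → Fin n → ℝ) (μ : Fin m → ℝ) (ν : Fin n → ℝ) : ℝ :=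
  sSup (dotS S '' Gamma μ ν)

/-- The maximum of `⟨S, γ⟩` over semi-relaxed transport plans `γ`, which have source marginal `μ`
and target capacities `ν`, as a supremum; it is the junk value `0` when there is no such plan. -/
def partialTransportMax {m n : ℕ} (S : Fin m → Fin n → ℝ) (μ : Fin m → ℝ) (ν : Fin n → ℝ) : ℝ :=
  sSup (dotS S '' GammaLe μ ν)

section TransportPlans

variable {m n : ℕ} {S γ : Fin m → Fin n → ℝ} {μ μ' : Fin m → ℝ} {ν ν' : Fin n → ℝ}

theorem Gamma_nonempty (hμ : 0 ≤ μ) (hν : 0 ≤ ν) (hmass : ∑ i, μ i = ∑ j, ν j) :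
    (Gamma μ ν).Nonempty := by
  refine ⟨fun i j => μ i * ν j / ∑ l, ν l, fun i j => ?_, fun i => ?_, fun j => ?_⟩
  · exact div_nonneg (mul_nonneg (hμ i) (hν j)) (Fintype.sum_nonneg hν)
  · have hμ_zero : ∑ l, ν l = 0 → μ i = 0 := fun hzero =>
      congrFun ((Fintype.sum_eq_zero_iff_of_nonneg hμ).1 (hmass.trans hzero)) i
    rw [← sum_div, ← mul_sum, mul_div_cancel_of_imp hμ_zero]
  · have hν_zero : ∑ l, ν l = 0 → ν j = 0 := fun hzero =>
      congrFun ((Fintype.sum_eq_zero_iff_of_nonneg hν).1 hzero) j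
    rw [← sum_div, ← sum_mul, hmass, mul_div_cancel_left_of_imp hν_zero]

theorem Gamma_subset_GammaLe (hν : ν ≤ ν') : Gamma μ ν ⊆ GammaLe μ ν' :=
  fun _ ⟨hnonneg, hrow, hcol⟩ => ⟨hnonneg, hrow, fun j => (hcol j).trans_le (hν j)⟩

theorem exists_mem_Gamma_ge_of_mem_GammaLe (hγ : γ ∈ GammaLe μ ν) (hμ : μ ≤ μ')
    (hmass : ∑ i, μ' i = ∑ j, ν j) : ∃ γ' ∈ Gamma μ' ν, γ ≤ γ' := by
  obtain ⟨hnonneg, hrow, hcol⟩ := hγ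
  have hresidual : ∑ i, (μ' i - μ i) = ∑ j, (ν j - ∑ i, γ i j) := by
    simp only [sum_sub_distrib, hmass, ← hrow]
    rw [sum_comm]
  obtain ⟨δ, hδ_nonneg, hδ_row, hδ_col⟩ :=
    Gamma_nonempty (fun i => sub_nonneg.2 (hμ i)) (fun j => sub_nonneg.2 (hcol j)) hresidual
  refine ⟨γ + δ, ⟨fun i j => add_nonneg (hnonneg i j) (hδ_nonneg i j), fun i => ?_, fun j => ?_⟩,
    le_add_of_nonneg_right hδ_nonneg⟩
  · simp only [Pi.add_apply, sum_add_distrib, hrow, hδ_row, add_sub_cancel]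
  · simp only [Pi.add_apply, sum_add_distrib, hδ_col, add_sub_cancel]

theorem dotS_mono (hS : 0 ≤ S) : Monotone (dotS S) := fun _ _ hle =>
  sum_le_sum fun i _ => sum_le_sum fun j _ => mul_le_mul_of_nonneg_left (hle i j) (hS i j)

theorem bddAbove_dotS_image_GammaLe : BddAbove (dotS S '' GammaLe μ ν) := by
  refine ⟨∑ i, ∑ j, |S i j| * μ i, ?_⟩
  rintro _ ⟨γ, ⟨hnonneg, hrow, -⟩, rfl⟩
  refine sum_le_sum fun i _ => sum_le_sum fun j _ => ?_
  have hentry : γ i j ≤ μ i :=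
    (single_le_sum (fun l _ => hnonneg i l) (mem_univ j)).trans_eq (hrow i)
  exact mul_le_mul (le_abs_self _) hentry (hnonneg i j) (abs_nonneg _)

theorem bddAbove_dotS_image_Gamma : BddAbove (dotS S '' Gamma μ ν) :=
  bddAbove_dotS_image_GammaLe.mono (Set.image_mono (Gamma_subset_GammaLe le_rfl))

theorem transportMax_le_partialTransportMax (hne : (Gamma μ ν).Nonempty) (hν : ν ≤ ν') :
    transportMax S μ ν ≤ partialTransportMax S μ ν' :=
  csSup_le_csSup bddAbove_dotS_image_GammaLe (hne.image _)
    (Set.image_mono (Gamma_subset_GammaLe hν))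

theorem partialTransportMax_le_transportMax (hS : 0 ≤ S) (hne : (GammaLe μ ν).Nonempty)
    (hμ : μ ≤ μ') (hmass : ∑ i, μ' i = ∑ j, ν j) :
    partialTransportMax S μ ν ≤ transportMax S μ' ν := by
  refine csSup_le (hne.image _) ?_
  rintro _ ⟨γ, hγ, rfl⟩
  obtain ⟨γ', hγ', hle⟩ := exists_mem_Gamma_ge_of_mem_GammaLe hγ hμ hmass
  exact (dotS_mono hS hle).trans (le_csSup bddAbove_dotS_image_Gamma ⟨γ', hγ', rfl⟩)

end TransportPlans

section Indicators

variable {m n k : ℕ} {S : Fin m → Fin n → ℝ} {P Q : Finset (Fin m)} {w : Fin n → ℝ}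

theorem indVec_nonneg_s12 : 0 ≤ indVec P := fun i => by
  unfold indVec
  positivity

theorem indVec_mono (hPQ : P ⊆ Q) : indVec P ≤ indVec Q := fun i => by
  by_cases hi : i ∈ P
  · simp [indVec, hi, hPQ hi]
  · simpa [indVec, hi] using indVec_nonneg_s12 (P := Q) i

theorem sum_indVec_eq_sum_card_smul (hw : w ∈ stdSimplex ℝ (Fin n)) :
    ∑ i, indVec P i = ∑ j, ((#P : ℝ) • w) j := by
  simp [indVec, ← mul_sum, hw.2]

theorem Gamma_indVec_nonempty (hw : w ∈ stdSimplex ℝ (Fin n)) :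
    (Gamma (indVec P) ((#P : ℝ) • w)).Nonempty :=
  Gamma_nonempty indVec_nonneg_s12 (smul_nonneg (Nat.cast_nonneg _) hw.1)
    (sum_indVec_eq_sum_card_smul hw)

theorem card_smul_le_smul (hw : w ∈ stdSimplex ℝ (Fin n)) (hP : #P ≤ k) :
    (#P : ℝ) • w ≤ (k : ℝ) • w :=
  smul_le_smul_of_nonneg_right (Nat.cast_le.2 hP) hw.1

theorem transportMax_indVec_le_partialTransportMax (hw : w ∈ stdSimplex ℝ (Fin n)) (hP : #P ≤ k) :
    transportMax S (indVec P) ((#P : ℝ) • w) ≤ partialTransportMax S (indVec P) ((k : ℝ) • w) :=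
  transportMax_le_partialTransportMax (Gamma_indVec_nonempty hw) (card_smul_le_smul hw hP)

theorem partialTransportMax_indVec_le_transportMax (hS : 0 ≤ S) (hw : w ∈ stdSimplex ℝ (Fin n))
    (hPQ : P ⊆ Q) :
    partialTransportMax S (indVec P) ((#Q : ℝ) • w) ≤
      transportMax S (indVec Q) ((#Q : ℝ) • w) :=
  have hne : (GammaLe (indVec P) ((#Q : ℝ) • w)).Nonempty :=
    (Gamma_indVec_nonempty hw).mono (Gamma_subset_GammaLe (card_smul_le_smul hw (card_le_card hPQ)))
  partialTransportMax_le_transportMax hS hne (indVec_mono hPQ) (sum_indVec_eq_sum_card_smul hw)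

end Indicators

theorem stmt_12_general {m n k : ℕ} {w : Fin n → ℝ} (hw : w ∈ stdSimplex ℝ (Fin n))
    {S : Fin m → Fin n → ℝ} (hS : 0 ≤ S) {Pstar : Finset (Fin m)} (hcard : #Pstar = k) :
    (∀ P : Finset (Fin m), #P ≤ k →
      transportMax S (indVec P) ((#P : ℝ) • w) ≤
        transportMax S (indVec Pstar) ((#Pstar : ℝ) • w)) ↔
    (∀ P : Finset (Fin m), #P ≤ k →
      partialTransportMax S (indVec P) ((k : ℝ) • w) ≤
        partialTransportMax S (indVec Pstar) ((k : ℝ) • w)) := by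
  subst hcard
  have hPstar : partialTransportMax S (indVec Pstar) ((#Pstar : ℝ) • w) =
      transportMax S (indVec Pstar) ((#Pstar : ℝ) • w) :=
    (partialTransportMax_indVec_le_transportMax hS hw subset_rfl).antisymm
      (transportMax_indVec_le_partialTransportMax hw le_rfl)
  rw [hPstar]
  constructor
  · intro hmax P hP
    obtain ⟨Q, hPQ, hQ⟩ := exists_superset_card_eq hP (card_le_univ Pstar)
    calc partialTransportMax S (indVec P) ((#Pstar : ℝ) • w)
        ≤ transportMax S (indVec Q) ((#Q : ℝ) • w) :=
          hQ ▸ partialTransportMax_indVec_le_transportMax hS hw hPQ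
      _ ≤ transportMax S (indVec Pstar) ((#Pstar : ℝ) • w) := hmax Q hQ.le
  · exact fun hmax P hP => (transportMax_indVec_le_partialTransportMax hw hP).trans (hmax P hP)

/-- a set `P*` of cardinality `k` maximizes `h` over sets of
cardinality at most `k` iff it maximizes `f` over sets of cardinality at most `k`. -/
theorem stmt_12 (m n k : ℕ) (hm : 0 < m) (hn : 0 < n) (hk : 0 < k)
    (hkm : k ≤ m) (hkn : k ≤ n)
    (S : Fin m → Fin n → ℝ) (hS : ∀ i j, 0 ≤ S i j)
    (Pstar : Finset (Fin m)) (hcard : Pstar.card = k) :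
    (∀ P : Finset (Fin m), P.card ≤ k → hval S P ≤ hval S Pstar) ↔
    (∀ P : Finset (Fin m), P.card ≤ k → fval k S P ≤ fval k S Pstar) := by
  have : Nonempty (Fin n) := ⟨⟨0, hn⟩⟩
  simpa only [hval, fval, transportMax, partialTransportMax, Pi.smul_def, smul_eq_mul,
    stdSimplex.barycenter_apply, Fintype.card_fin, div_eq_mul_inv] using
    stmt_12_general (stdSimplex.barycenter (𝕜 := ℝ) (X := Fin n)).2 hS hcard
end
end
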